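/- For every fixed real number $q$, $\lim_{x \to +\infty} \dfrac{\sqrt{2\pi}\, e^{2q - x}\, (x-1)\, (x - 2q)^{x-3} - \Gamma\!\left(x - \tfrac{3}{2}\right) - \tfrac{1}{2}\Gamma\!\left(x - \tfrac{5}{2}\right)\mathcal{P}_1(q) - \tfrac{1}{4}\Gamma\!\left(x - \tfrac{7}{2}\right)\mathcal{P}_2(q)}{\Gamma\!\left(x - \tfrac{9}{2}\right)} = \frac{1}{8}\left(-\frac{17534803}{51840} + \frac{33553 q}{24} - \frac{157393 q^2}{72} + \frac{15220 q^3}{9} - \frac{2062 q^4}{3} + \frac{416 q^5}{3} - \frac{32 q^6}{3}\right)$, where $\mathcal{P}_1(q) = -\tfrac{71}{12} + 12q - 4q^2$ and $\mathcal{P}_2(q) = \tfrac{11545}{288} - 131 q + \tfrac{419 q^2}{3} - \tfrac{176 q^3}{3} + 8 q^4$. (This identifies the polynomial $\mathcal{P}_3(q)$ in the diagonal asymptotic expansion.) -/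

import Mathlib

open Real Filter Topology

/-!
Put `y = x - 9/2` and divide by `Γ(y)`. The functional equation turns the Gamma quotients into
polynomials in `y`, and `√(2π) e^{-(y+a)} (y+a)^{y+3/2} / Γ(y)` with `a = 9/2 - 2q` becomes
`y² exp(u(y))`, where Stirling's series for `log Γ` and the Taylor series of `log(1 + a/y)` give
`u(y) = c₁/y + c₂/y² + c₃/y³ + O(y⁻⁴)`. Exponentiating, the polynomials `𝒫₁` and `𝒫₂` cancel every
positive power of `y`, and the constant term that is left is the limit.

Stirling's series holds because its remainder `R` satisfies `R(y+1) - R(y) = O(y⁻⁶)`, by the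
functional equation, and `R(y+n) → 0` along the integers, by Euler's limit formula for `Γ(y)` and
Stirling's formula for `n!`; summing the differences gives `R(y) = O(y⁻⁵)`.
-/

section Expansions

variable {α : Type*} {l : Filter α} {g : α → ℝ}

lemma isBigO_comp_mul_pow (hg : Tendsto g l (𝓝 0)) {f : ℝ → ℝ} (hf : ContinuousAt f 0) (n : ℕ) :
    (fun y => f (g y) * g y ^ n) =O[l] (fun y => g y ^ n) := by
  have bounded : (fun y => f (g y)) =O[l] (fun _ => (1 : ℝ)) :=
    (hf.tendsto.comp hg).isBigO_one ℝ
  simpa only [one_mul] using bounded.mul (Asymptotics.isBigO_refl (fun y => g y ^ n) l)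

lemma exp_sub_exp_isBigO_sub {u w : α → ℝ} (hu : Tendsto u l (𝓝 0)) (hw : Tendsto w l (𝓝 0)) :
    (fun y => exp (u y) - exp (w y)) =O[l] (fun y => u y - w y) :=
  (hasStrictDerivAt_exp 0).hasStrictFDerivAt.isBigO_sub.comp_tendsto (hu.prodMk_nhds hw)

lemma exp_sub_sum_range_isBigO {u w : α → ℝ} {n : ℕ} (hn : n ≠ 0) (hg : Tendsto g l (𝓝 0))
    (hw : w =O[l] g) (huw : (fun y => u y - w y) =O[l] (fun y => g y ^ n)) :
    (fun y => exp (u y) - ∑ i ∈ Finset.range n, w y ^ i / i.factorial) =O[l]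
      (fun y => g y ^ n) := by
  have w_tendsto : Tendsto w l (𝓝 0) := hw.trans_tendsto hg
  have u_tendsto : Tendsto u l (𝓝 0) := by
    simpa [hn] using (huw.trans_tendsto (hg.pow n |>.trans_eq (by simp [hn]))).add w_tendsto
  have taylor : (fun y => exp (w y) - ∑ i ∈ Finset.range n, w y ^ i / i.factorial) =O[l]
      (fun y => g y ^ n) :=
    ((Real.exp_sub_sum_range_isBigO_pow n).comp_tendsto w_tendsto).trans (hw.pow n)
  simpa only [sub_add_sub_cancel] using
    ((exp_sub_exp_isBigO_sub u_tendsto w_tendsto).trans huw).add taylor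

lemma exp_sub_cubic_isBigO {u : α → ℝ} {c₁ c₂ c₃ : ℝ} (hg : Tendsto g l (𝓝 0))
    (hu : (fun y => u y - (c₁ * g y + c₂ * g y ^ 2 + c₃ * g y ^ 3)) =O[l] (fun y => g y ^ 4)) :
    (fun y => exp (u y) - (1 + c₁ * g y + (c₂ + c₁ ^ 2 / 2) * g y ^ 2 +
      (c₃ + c₁ * c₂ + c₁ ^ 3 / 6) * g y ^ 3)) =O[l] (fun y => g y ^ 4) := by
  have cubic_isBigO : (fun y => c₁ * g y + c₂ * g y ^ 2 + c₃ * g y ^ 3) =O[l] g :=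
    (isBigO_comp_mul_pow hg (f := fun t => c₁ + c₂ * t + c₃ * t ^ 2) (by fun_prop) 1).congr
      (fun y => by ring) (fun y => pow_one _)
  -- The witness collects the terms of degree at least four in `1 + w + w ^ 2 / 2 + w ^ 3 / 6`.
  have truncation := isBigO_comp_mul_pow hg
    (f := fun t => (c₂ ^ 2 + 2 * c₁ * c₃ + 2 * c₂ * c₃ * t + c₃ ^ 2 * t ^ 2) / 2 +
      (c₂ + c₃ * t) * ((c₁ + c₂ * t + c₃ * t ^ 2) ^ 2 + (c₁ + c₂ * t + c₃ * t ^ 2) * c₁ +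
        c₁ ^ 2) / 6) (by fun_prop) 4
  refine ((exp_sub_sum_range_isBigO four_ne_zero hg cubic_isBigO hu).add truncation).congr_left
    fun y => ?_
  simp only [Finset.sum_range_succ, Finset.sum_range_zero, Nat.factorial]
  push_cast
  ring

lemma log_one_add_sub_sum_range_isBigO_pow (n : ℕ) :
    (fun x : ℝ => log (1 + x) - ∑ i ∈ Finset.range n, (-1) ^ i * x ^ (i + 1) / (i + 1))
      =O[𝓝 0] (fun x => x ^ (n + 1)) := by
  refine .of_bound 2 ?_
  have small : ∀ᶠ x : ℝ in 𝓝 0, |x| < 1 / 2 :=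
    continuous_abs.tendsto' (0 : ℝ) 0 abs_zero |>.eventually_lt_const (by norm_num)
  filter_upwards [small] with x hx
  have taylor := Real.abs_log_sub_add_sum_range_le (x := -x) (by rw [abs_neg]; linarith) n
  have sum_neg : ∑ i ∈ Finset.range n, (-x) ^ (i + 1) / ((i : ℝ) + 1) =
      -∑ i ∈ Finset.range n, (-1) ^ i * x ^ (i + 1) / ((i : ℝ) + 1) := by
    rw [← Finset.sum_neg_distrib]
    refine Finset.sum_congr rfl fun i _ => ?_
    rw [neg_pow]
    ring
  rw [sum_neg, neg_add_eq_sub, sub_neg_eq_add, abs_neg] at taylor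
  calc ‖log (1 + x) - ∑ i ∈ Finset.range n, (-1) ^ i * x ^ (i + 1) / ((i : ℝ) + 1)‖
      ≤ |x| ^ (n + 1) / (1 - |x|) := taylor
    _ ≤ |x| ^ (n + 1) / (1 / 2) := by gcongr; linarith
    _ = 2 * ‖x ^ (n + 1)‖ := by rw [norm_pow, Real.norm_eq_abs]; ring

lemma add_const_isBigO_self_atTop (b : ℝ) : (fun y => y + b) =O[atTop] (fun y : ℝ => y) :=
  (Asymptotics.isBigO_refl _ _).add (Asymptotics.isLittleO_const_id_atTop b).isBigO

lemma add_mul_log_one_add_sub_sum_range_isBigO (a b : ℝ) (n : ℕ) :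
    (fun y : ℝ => (y + b) * (log (1 + a * y⁻¹) -
        ∑ i ∈ Finset.range n, (-1) ^ i * (a * y⁻¹) ^ (i + 1) / (i + 1)))
      =O[atTop] (fun y => y⁻¹ ^ n) := by
  have arg_tendsto : Tendsto (fun y : ℝ => a * y⁻¹) atTop (𝓝 0) := by
    simpa using tendsto_inv_atTop_zero.const_mul a
  have arg_isBigO : (fun y : ℝ => (a * y⁻¹) ^ (n + 1)) =O[atTop] (fun y => y⁻¹ ^ (n + 1)) :=
    ((Asymptotics.isBigO_refl (fun y : ℝ => y⁻¹) atTop).const_mul_left a).pow (n + 1)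
  have remainder :=
    ((log_one_add_sub_sum_range_isBigO_pow n).comp_tendsto arg_tendsto).trans arg_isBigO
  refine ((add_const_isBigO_self_atTop b).mul remainder).trans_eventuallyEq ?_
  filter_upwards [eventually_gt_atTop 0] with y hy
  rw [pow_succ', mul_inv_cancel_left₀ hy.ne']

end Expansions

section Telescoping

lemma inv_pow_add_two_le {z : ℝ} (hz : 1 ≤ z) (k : ℕ) :
    z⁻¹ ^ (k + 2) ≤ 2 * (z⁻¹ ^ (k + 1) - (z + 1)⁻¹ ^ (k + 1)) := by
  have inv_le : (z + 1)⁻¹ ≤ z⁻¹ := by gcongr; linarith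
  have half_sq_le : z⁻¹ ^ 2 ≤ 2 * (z⁻¹ - (z + 1)⁻¹) := by
    have : 2 * (z⁻¹ - (z + 1)⁻¹) - z⁻¹ ^ 2 = (z - 1) / (z ^ 2 * (z + 1)) := by
      field_simp
      ring
    have : 0 ≤ (z - 1) / (z ^ 2 * (z + 1)) := div_nonneg (by linarith) (by positivity)
    linarith
  calc z⁻¹ ^ (k + 2) = z⁻¹ ^ 2 * z⁻¹ ^ k := by ring
    _ ≤ 2 * (z⁻¹ - (z + 1)⁻¹) * z⁻¹ ^ k := by gcongr
    _ = 2 * (z⁻¹ ^ (k + 1) - (z + 1)⁻¹ * z⁻¹ ^ k) := by ring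
    _ ≤ 2 * (z⁻¹ ^ (k + 1) - (z + 1)⁻¹ * (z + 1)⁻¹ ^ k) := by gcongr
    _ = 2 * (z⁻¹ ^ (k + 1) - (z + 1)⁻¹ ^ (k + 1)) := by ring

variable {E : Type*} [NormedAddCommGroup E] {f : ℝ → E} {k : ℕ}

lemma norm_add_nat_sub_le_of_norm_add_one_sub_le {C y : ℝ} (hC : 0 ≤ C) (hy : 1 ≤ y)
    (hf : ∀ z, y ≤ z → ‖f (z + 1) - f z‖ ≤ C * z⁻¹ ^ (k + 2)) (n : ℕ) :
    ‖f (y + n) - f y‖ ≤ 2 * C * (y⁻¹ ^ (k + 1) - (y + n)⁻¹ ^ (k + 1)) := by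
  induction n with
  | zero => simp
  | succ n ih =>
    have y_le : y ≤ y + n := le_add_of_nonneg_right n.cast_nonneg
    rw [Nat.cast_succ, ← add_assoc]
    calc ‖f (y + n + 1) - f y‖ ≤ ‖f (y + n + 1) - f (y + n)‖ + ‖f (y + n) - f y‖ :=
          norm_sub_le_norm_sub_add_norm_sub _ _ _
      _ ≤ C * (y + n)⁻¹ ^ (k + 2) + 2 * C * (y⁻¹ ^ (k + 1) - (y + n)⁻¹ ^ (k + 1)) :=
          add_le_add (hf _ y_le) ih
      _ ≤ C * (2 * ((y + n)⁻¹ ^ (k + 1) - (y + n + 1)⁻¹ ^ (k + 1))) +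
            2 * C * (y⁻¹ ^ (k + 1) - (y + n)⁻¹ ^ (k + 1)) := by
          gcongr
          exact inv_pow_add_two_le (hy.trans y_le) k
      _ = 2 * C * (y⁻¹ ^ (k + 1) - (y + n + 1)⁻¹ ^ (k + 1)) := by ring

lemma isBigO_inv_pow_of_add_one_sub_isBigO
    (hdiff : (fun y => f (y + 1) - f y) =O[atTop] (fun y => y⁻¹ ^ (k + 2)))
    (hlim : ∀ᶠ y in atTop, Tendsto (fun n : ℕ => f (y + n)) atTop (𝓝 0)) :
    f =O[atTop] (fun y => y⁻¹ ^ (k + 1)) := by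
  obtain ⟨C, C_pos, hC⟩ := hdiff.exists_pos
  obtain ⟨Y, hY⟩ := eventually_atTop.mp hC.bound
  refine .of_bound (2 * C) ?_
  filter_upwards [eventually_ge_atTop Y, eventually_ge_atTop 1, hlim] with y hYy hy y_lim
  have step : ∀ z, y ≤ z → ‖f (z + 1) - f z‖ ≤ C * z⁻¹ ^ (k + 2) := fun z hz => by
    have z_nonneg : 0 ≤ z := by linarith
    simpa [abs_of_nonneg z_nonneg] using hY z (hYy.trans hz)
  have norm_lim : Tendsto (fun n : ℕ => ‖f (y + n) - f y‖) atTop (𝓝 ‖f y‖) := by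
    simpa using (y_lim.sub_const (f y)).norm
  refine le_of_tendsto' norm_lim fun n => ?_
  calc ‖f (y + n) - f y‖ ≤ 2 * C * (y⁻¹ ^ (k + 1) - (y + n)⁻¹ ^ (k + 1)) :=
        norm_add_nat_sub_le_of_norm_add_one_sub_le C_pos.le hy step n
    _ ≤ 2 * C * y⁻¹ ^ (k + 1) := by
        gcongr
        exact sub_le_self _ (by positivity)
    _ = 2 * C * ‖y⁻¹ ^ (k + 1)‖ := by rw [Real.norm_of_nonneg (by positivity)]

end Telescoping

section Stirling

/-- The error `log Γ(y) - S(y)` of Stirling's series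
`S(y) = (y - 1/2) log y - y + log(2π)/2 + 1/(12y) - 1/(360y³)` truncated after its second
correction term. -/
noncomputable def stirlingRemainder (y : ℝ) : ℝ :=
  log (Gamma y) - ((y - 1 / 2) * log y - y + log (2 * π) / 2 + y⁻¹ / 12 - y⁻¹ ^ 3 / 360)

lemma log_one_add_mul_inv {a y : ℝ} (hy : 0 < y) (hya : 0 < y + a) :
    log (1 + a * y⁻¹) = log (y + a) - log y := by
  rw [← log_div hya.ne' hy.ne', add_div, div_self hy.ne', div_eq_mul_inv]

lemma log_Gamma_add_one {y : ℝ} (hy : 0 < y) : log (Gamma (y + 1)) = log (Gamma y) + log y := by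
  rw [Gamma_add_one hy.ne', log_mul hy.ne' (Gamma_pos_of_pos hy).ne', add_comm]

lemma log_Gamma_add_nat {y : ℝ} (hy : 0 < y) (n : ℕ) :
    log (Gamma (y + n)) = log (Gamma y) + ∑ m ∈ Finset.range n, log (y + m) :=
  BohrMollerup.f_add_nat_eq (f := fun y => log (Gamma y)) log_Gamma_add_one hy n

lemma log_Gamma_add_nat_succ_sub_stirling_eq {y : ℝ} (hy : 0 < y) {n : ℕ} (hn : 0 < n) :
    log (Gamma (y + (n + 1 : ℕ))) - ((y + (n + 1 : ℕ) - 1 / 2) * log (y + (n + 1 : ℕ)) -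
        (y + (n + 1 : ℕ)) + log (2 * π) / 2) =
      (log (Gamma y) - BohrMollerup.logGammaSeq y n) +
        (log (Stirling.stirlingSeq n) - log π / 2) -
        (n * log (1 + (y + 1) / n) - (y + 1)) - (y + 1 / 2) * log (1 + (y + 1) / n) := by
  have n_pos : (0 : ℝ) < n := Nat.cast_pos.mpr hn
  have log_quotient : log (1 + (y + 1) / n) = log (y + (n + 1 : ℕ)) - log n := by
    rw [div_eq_mul_inv, log_one_add_mul_inv n_pos (by positivity)]
    congr 2
    push_cast
    ring
  rw [log_quotient, log_Gamma_add_nat hy, BohrMollerup.logGammaSeq,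
    Stirling.log_stirlingSeq_formula, log_mul two_ne_zero n_pos.ne',
    log_div n_pos.ne' (exp_ne_zero _), log_exp, log_mul two_ne_zero pi_ne_zero]
  push_cast
  ring

lemma tendsto_log_Gamma_add_nat_sub_stirling {y : ℝ} (hy : 0 < y) :
    Tendsto (fun n : ℕ => log (Gamma (y + n)) -
      ((y + n - 1 / 2) * log (y + n) - (y + n) + log (2 * π) / 2)) atTop (𝓝 0) := by
  rw [← tendsto_add_atTop_iff_nat 1]
  have euler : Tendsto (fun n => log (Gamma y) - BohrMollerup.logGammaSeq y n) atTop (𝓝 0) := by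
    simpa using (BohrMollerup.tendsto_log_gamma hy).const_sub (log (Gamma y))
  have factorial : Tendsto (fun n => log (Stirling.stirlingSeq n) - log π / 2) atTop (𝓝 0) := by
    simpa [log_sqrt pi_pos.le] using
      (Stirling.tendsto_stirlingSeq_sqrt_pi.log (by positivity)).sub_const (log π / 2)
  have mul_log : Tendsto (fun n : ℕ => n * log (1 + (y + 1) / n) - (y + 1)) atTop (𝓝 0) := by
    simpa using ((tendsto_mul_log_one_add_div_atTop (y + 1)).comp
      tendsto_natCast_atTop_atTop).sub_const (y + 1)
  have log_small : Tendsto (fun n : ℕ => log (1 + (y + 1) / n)) atTop (𝓝 0) := by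
    simpa using ((tendsto_const_div_atTop_nhds_zero_nat (y + 1)).const_add 1).log (by norm_num)
  have total := ((euler.add factorial).sub mul_log).sub (log_small.const_mul (y + 1 / 2))
  simp only [mul_zero, add_zero, sub_zero] at total
  refine total.congr' ?_
  filter_upwards [eventually_gt_atTop 0] with n hn
  exact (log_Gamma_add_nat_succ_sub_stirling_eq hy hn).symm

lemma tendsto_stirlingRemainder_add_nat {y : ℝ} (hy : 0 < y) :
    Tendsto (fun n : ℕ => stirlingRemainder (y + n)) atTop (𝓝 0) := by
  have inv_tendsto : Tendsto (fun n : ℕ => (y + n)⁻¹) atTop (𝓝 0) :=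
    tendsto_inv_atTop_zero.comp (tendsto_atTop_add_const_left _ _ tendsto_natCast_atTop_atTop)
  have corrections := ((inv_tendsto.pow 3).div_const 360).sub (inv_tendsto.div_const 12)
  refine Tendsto.congr (fun n => ?_) (by
    simpa using (tendsto_log_Gamma_add_nat_sub_stirling hy).add corrections)
  rw [stirlingRemainder, inv_pow]
  ring

lemma stirlingRemainder_add_one_sub_eq {y : ℝ} (hy : 0 < y) :
    stirlingRemainder (y + 1) - stirlingRemainder y =
      1 - (y + 1 / 2) * log (1 + y⁻¹) + (y⁻¹ - (y + 1)⁻¹) / 12 -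
        (y⁻¹ ^ 3 - (y + 1)⁻¹ ^ 3) / 360 := by
  have log_quotient : log (1 + y⁻¹) = log (y + 1) - log y := by
    simpa only [one_mul] using log_one_add_mul_inv (a := 1) hy (by positivity)
  rw [log_quotient, stirlingRemainder, stirlingRemainder, log_Gamma_add_one hy]
  ring

lemma stirlingRemainder_add_one_sub_isBigO :
    (fun y => stirlingRemainder (y + 1) - stirlingRemainder y) =O[atTop]
      (fun y => y⁻¹ ^ 6) := by
  have log_part := add_mul_log_one_add_sub_sum_range_isBigO 1 (1 / 2) 6
  simp only [one_mul] at log_part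
  -- What is left once `log (1 + t)` is replaced by its Taylor polynomial of degree six, `t = y⁻¹`.
  have rational_part := isBigO_comp_mul_pow tendsto_inv_atTop_zero (n := 6)
    (f := fun t : ℝ => (5 / 36 + 3 / 8 * t + 19 / 60 * t ^ 2 + 1 / 12 * t ^ 3) / (1 + t) ^ 3)
    (ContinuousAt.div (by fun_prop) (by fun_prop) (by norm_num))
  refine (rational_part.sub log_part).congr' ?_ .rfl
  filter_upwards [eventually_gt_atTop 0] with y hy
  rw [stirlingRemainder_add_one_sub_eq hy]
  simp only [Finset.sum_range_succ, Finset.sum_range_zero]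
  generalize log (1 + y⁻¹) = L
  push_cast
  field_simp
  ring

theorem stirlingRemainder_isBigO : stirlingRemainder =O[atTop] (fun y => y⁻¹ ^ 5) :=
  isBigO_inv_pow_of_add_one_sub_isBigO stirlingRemainder_add_one_sub_isBigO <|
    (eventually_gt_atTop 0).mono fun _ => tendsto_stirlingRemainder_add_nat

end Stirling

section StirlingQuotient

/-- The power `√(2π) e^{-(y+a)} (y+a)^{y+b}` divided by its leading asymptotic order
`y^{b+1/2} Γ(y)`. -/
noncomputable def stirlingQuotient (a b y : ℝ) : ℝ :=
  √(2 * π) * exp (-(y + a)) * (y + a) ^ (y + b) / (y ^ (b + 1 / 2) * Gamma y)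

/-- The coefficient of `y⁻¹` in the expansion of `log (stirlingQuotient a b y)` at infinity. -/
noncomputable def logQuotientCoeff₁ (a b : ℝ) : ℝ := a * b - a ^ 2 / 2 - 1 / 12

/-- The coefficient of `y⁻²` in the expansion of `log (stirlingQuotient a b y)` at infinity. -/
noncomputable def logQuotientCoeff₂ (a b : ℝ) : ℝ := a ^ 3 / 3 - a ^ 2 * b / 2

/-- The coefficient of `y⁻³` in the expansion of `log (stirlingQuotient a b y)` at infinity. -/
noncomputable def logQuotientCoeff₃ (a b : ℝ) : ℝ := a ^ 3 * b / 3 - a ^ 4 / 4 + 1 / 360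

variable {a b : ℝ}

lemma rpow_mul_stirlingQuotient_mul_Gamma {y : ℝ} (hy : 0 < y) :
    y ^ (b + 1 / 2) * stirlingQuotient a b y * Gamma y =
      √(2 * π) * exp (-(y + a)) * (y + a) ^ (y + b) := by
  have Gamma_ne_zero : Gamma y ≠ 0 := (Gamma_pos_of_pos hy).ne'
  rw [stirlingQuotient]
  field_simp

lemma log_stirlingQuotient {y : ℝ} (hy : 0 < y) (hya : 0 < y + a) :
    log (stirlingQuotient a b y) =
      (y + b) * log (1 + a * y⁻¹) - a - y⁻¹ / 12 + y⁻¹ ^ 3 / 360 - stirlingRemainder y := by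
  rw [stirlingQuotient, log_div (by positivity) (by positivity), log_mul (by positivity)
    (by positivity), log_mul (by positivity) (by positivity), log_mul (by positivity)
    (by positivity), log_sqrt (by positivity), log_exp, log_rpow hya, log_rpow hy,
    log_one_add_mul_inv hy hya, stirlingRemainder]
  ring

variable (a b)

lemma log_stirlingQuotient_sub_cubic_isBigO :
    (fun y => log (stirlingQuotient a b y) - (logQuotientCoeff₁ a b * y⁻¹ +
      logQuotientCoeff₂ a b * y⁻¹ ^ 2 + logQuotientCoeff₃ a b * y⁻¹ ^ 3)) =O[atTop]
      (fun y => y⁻¹ ^ 4) := by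
  have remainder : stirlingRemainder =O[atTop] (fun y => y⁻¹ ^ 4) :=
    stirlingRemainder_isBigO.trans <|
      (isBigO_comp_mul_pow tendsto_inv_atTop_zero continuousAt_id 4).congr_left
        fun y => (pow_succ' _ _).symm
  have quartic := isBigO_comp_mul_pow tendsto_inv_atTop_zero
    (f := fun _ => -(a ^ 4 * b / 4)) continuousAt_const 4
  refine (((add_mul_log_one_add_sub_sum_range_isBigO a b 4).add quartic).sub remainder).congr'
    ?_ .rfl
  filter_upwards [eventually_gt_atTop 0, eventually_gt_atTop (-a)] with y hy hya
  rw [log_stirlingQuotient hy (by linarith)]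
  simp only [logQuotientCoeff₁, logQuotientCoeff₂, logQuotientCoeff₃, Finset.sum_range_succ,
    Finset.sum_range_zero]
  generalize log (1 + a * y⁻¹) = L
  push_cast
  field_simp
  ring

theorem stirlingQuotient_sub_cubic_isBigO :
    (fun y => stirlingQuotient a b y - (1 + logQuotientCoeff₁ a b * y⁻¹ +
      (logQuotientCoeff₂ a b + logQuotientCoeff₁ a b ^ 2 / 2) * y⁻¹ ^ 2 +
      (logQuotientCoeff₃ a b + logQuotientCoeff₁ a b * logQuotientCoeff₂ a b +
        logQuotientCoeff₁ a b ^ 3 / 6) * y⁻¹ ^ 3)) =O[atTop] (fun y => y⁻¹ ^ 4) := by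
  refine (exp_sub_cubic_isBigO tendsto_inv_atTop_zero
    (log_stirlingQuotient_sub_cubic_isBigO a b)).congr' ?_ .rfl
  filter_upwards [eventually_gt_atTop 0, eventually_gt_atTop (-a)] with y hy hya
  have base_pos : 0 < y + a := by linarith
  rw [exp_log (by rw [stirlingQuotient]; positivity)]

end StirlingQuotient

lemma tendsto_sq_mul_add_mul_sub_cubic {F : ℝ → ℝ} {e₁ e₂ e₃ : ℝ}
    (hF : (fun y => F y - (1 + e₁ * y⁻¹ + e₂ * y⁻¹ ^ 2 + e₃ * y⁻¹ ^ 3)) =O[atTop]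
      (fun y => y⁻¹ ^ 4)) (d : ℝ) :
    Tendsto (fun y => y ^ 2 * (y + d) * F y - (y ^ 3 + (e₁ + d) * y ^ 2 + (e₂ + d * e₁) * y))
      atTop (𝓝 (e₃ + d * e₂)) := by
  have factor : (fun y : ℝ => y ^ 2 * (y + d)) =O[atTop] (fun y => y ^ 2 * y) :=
    (Asymptotics.isBigO_refl _ _).mul (add_const_isBigO_self_atTop d)
  have error_tendsto := (factor.mul hF).trans_tendsto <|
    tendsto_inv_atTop_zero.congr' <| by
      filter_upwards [eventually_gt_atTop 0] with y hy
      field_simp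
  have tail_tendsto := (tendsto_inv_atTop_zero (𝕜 := ℝ)).const_mul (d * e₃)
  have total := (error_tendsto.add tail_tendsto).add_const (e₃ + d * e₂)
  simp only [mul_zero, zero_add] at total
  refine total.congr' ?_
  filter_upwards [eventually_gt_atTop 0] with y hy
  field_simp
  ring

lemma sub_Gamma_div_Gamma_eq_stirlingQuotient (a d p₁ p₂ : ℝ) {y : ℝ} (hy : 0 < y) :
    (√(2 * π) * exp (-(y + a)) * (y + d) * (y + a) ^ (y + 3 / 2) - Gamma (y + 3) -
        1 / 2 * Gamma (y + 2) * p₁ - 1 / 4 * Gamma (y + 1) * p₂) / Gamma y =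
      y ^ 2 * (y + d) * stirlingQuotient a (3 / 2) y -
        (y ^ 3 + (3 + p₁ / 2) * y ^ 2 + (2 + p₁ / 2 + p₂ / 4) * y) := by
  have Gamma_ne_zero : Gamma y ≠ 0 := (Gamma_pos_of_pos hy).ne'
  have Gamma_add_two : Gamma (y + 2) = (y + 1) * (y * Gamma y) := by
    rw [← one_add_one_eq_two, ← add_assoc, Gamma_add_one (by positivity), Gamma_add_one hy.ne']
  have Gamma_add_three : Gamma (y + 3) = (y + 2) * ((y + 1) * (y * Gamma y)) := by
    rw [← two_add_one_eq_three, ← add_assoc, Gamma_add_one (by positivity), Gamma_add_two]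
  have power_eq := rpow_mul_stirlingQuotient_mul_Gamma (a := a) (b := 3 / 2) hy
  rw [show (3 / 2 + 1 / 2 : ℝ) = 2 by norm_num, rpow_ofNat] at power_eq
  rw [mul_right_comm _ (y + d), ← power_eq, Gamma_add_three, Gamma_add_two, Gamma_add_one hy.ne']
  field_simp
  ring

/-- the third subleading diagonal asymptotics identify the polynomial
`𝒫_3(q)`, where `𝒫_1(q) = -71/12 + 12q - 4q²` and
`𝒫_2(q) = 11545/288 - 131q + 419q²/3 - 176q³/3 + 8q⁴`. -/
theorem diagonal_subleading_P3 (q : ℝ) :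
    Tendsto
      (fun x : ℝ =>
        (Real.sqrt (2 * Real.pi) * Real.exp (2 * q - x) * (x - 1) * (x - 2 * q) ^ (x - 3) -
            Real.Gamma (x - 3 / 2) -
            1 / 2 * Real.Gamma (x - 5 / 2) * (-(71 / 12) + 12 * q - 4 * q ^ 2) -
            1 / 4 * Real.Gamma (x - 7 / 2) *
              (11545 / 288 - 131 * q + 419 * q ^ 2 / 3 - 176 * q ^ 3 / 3 + 8 * q ^ 4)) /
          Real.Gamma (x - 9 / 2))
      atTop
      (𝓝 (1 / 8 * (-(17534803 / 51840) + 33553 * q / 24 - 157393 * q ^ 2 / 72 +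
        15220 * q ^ 3 / 9 - 2062 * q ^ 4 / 3 + 416 * q ^ 5 / 3 - 32 * q ^ 6 / 3))) := by
  have limit := (tendsto_sq_mul_add_mul_sub_cubic
    (stirlingQuotient_sub_cubic_isBigO (9 / 2 - 2 * q) (3 / 2)) (7 / 2)).comp
      (tendsto_atTop_add_const_right atTop (-(9 / 2)) tendsto_id)
  refine (limit.congr' ?_).trans_eq ?_
  · filter_upwards [eventually_gt_atTop (9 / 2)] with x hx
    obtain ⟨y, rfl⟩ : ∃ y, x = y + 9 / 2 := ⟨x - 9 / 2, by ring⟩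
    have quotient_eq := sub_Gamma_div_Gamma_eq_stirlingQuotient (9 / 2 - 2 * q) (7 / 2)
      (-(71 / 12) + 12 * q - 4 * q ^ 2)
      (11545 / 288 - 131 * q + 419 * q ^ 2 / 3 - 176 * q ^ 3 / 3 + 8 * q ^ 4)
      (y := y) (by linarith)
    convert! quotient_eq.symm using 1
    · simp only [Function.comp_apply, id, add_neg_cancel_right, logQuotientCoeff₁,
        logQuotientCoeff₂]
      ring
    · ring_nf
  · simp only [logQuotientCoeff₁, logQuotientCoeff₂, logQuotientCoeff₃]
    congr 1
    ring
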